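/- Let f = (f_0, f_1, f_2) be a holomorphic solution of the A_2^(1) system with parameters α on an open set U ⊂ ℂ with f_0 nonvanishing on U, and define u_0 = 1/f_0, u_1 = f_0 (α_1 − f_0 f_1) and u_2 = f_0 + f_1 + f_2 − u_0 − u_1. Then on U the functions (u_0, u_1, u_2) satisfy the polynomial system u_0' = 2u_0^3 u_1 − (α_0 + 2α_1 − 1)u_0^2 + (u_1 + u_2)u_0 − 1, u_1' = −3u_0^2 u_1^2 + (2α_0 + 4α_1 − 1)u_0 u_1 − (u_1 + u_2)u_1 − (α_0 + α_1)α_1, and u_0' + u_1' + u_2' = α_0 + α_1 + α_2. -/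

import Mathlib

/-!
On `U` the functions `u i` agree with explicit expressions in the `f i`, and since `U` is open this
agreement holds near each point, so derivatives may be computed from those expressions. The first
two claims then become rational identities in `f₀, f₁, f₂`, valid because `f₀ ≠ 0`. For the third,
`u₀ + u₁ + u₂ = f₀ + f₁ + f₂`, and the quadratic terms of the system cancel in the sum.
-/

/-- If `f = (f₀,f₁,f₂)` solves the `A₂⁽¹⁾` system on an open set `U` with `f₀`
nonvanishing, then the coordinates `u₀ = 1/f₀`, `u₁ = f₀(α₁ − f₀f₁)`,
`u₂ = f₀+f₁+f₂ − u₀ − u₁` satisfy the stated polynomial system, and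
`u₀' + u₁' + u₂' = α₀ + α₁ + α₂`. -/
theorem uCoords_type1_A2 (α : Fin 3 → ℂ) (U : Set ℂ) (hU : IsOpen U)
    (f u : Fin 3 → ℂ → ℂ)
    (hf : ∀ i : Fin 3, ∀ t ∈ U,
      HasDerivAt (f i) (f i t * (f (i + 1) t - f (i + 2) t) + α i) t)
    (hf0 : ∀ t ∈ U, f 0 t ≠ 0)
    (hu0 : ∀ t ∈ U, u 0 t = 1 / f 0 t)
    (hu1 : ∀ t ∈ U, u 1 t = f 0 t * (α 1 - f 0 t * f 1 t))
    (hu2 : ∀ t ∈ U, u 2 t = f 0 t + f 1 t + f 2 t - u 0 t - u 1 t) :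
    ∀ t ∈ U,
      HasDerivAt (u 0)
        (2 * u 0 t ^ 3 * u 1 t - (α 0 + 2 * α 1 - 1) * u 0 t ^ 2 +
          (u 1 t + u 2 t) * u 0 t - 1) t ∧
      HasDerivAt (u 1)
        (-3 * u 0 t ^ 2 * u 1 t ^ 2 + (2 * α 0 + 4 * α 1 - 1) * u 0 t * u 1 t -
          (u 1 t + u 2 t) * u 1 t - (α 0 + α 1) * α 1) t ∧
      HasDerivAt (fun s => u 0 s + u 1 s + u 2 s) (α 0 + α 1 + α 2) t := by
  intro t ht
  have hU' : U ∈ nhds t := hU.mem_nhds ht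
  have h0 := hf0 t ht
  have d0 : HasDerivAt (f 0) (f 0 t * (f 1 t - f 2 t) + α 0) t := hf 0 t ht
  have d1 : HasDerivAt (f 1) (f 1 t * (f 2 t - f 0 t) + α 1) t := hf 1 t ht
  have d2 : HasDerivAt (f 2) (f 2 t * (f 0 t - f 1 t) + α 2) t := hf 2 t ht
  refine ⟨?_, ?_, ?_⟩
  · have e : u 0 =ᶠ[nhds t] fun s => (f 0 s)⁻¹ := by
      filter_upwards [hU'] with s hs
      rw [hu0 s hs, one_div]
    refine ((d0.fun_inv h0).congr_of_eventuallyEq e).congr_deriv ?_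
    rw [hu2 t ht, hu1 t ht, hu0 t ht]
    field_simp
    ring
  · have e : u 1 =ᶠ[nhds t] fun s => f 0 s * (α 1 - f 0 s * f 1 s) := by
      filter_upwards [hU'] with s hs
      exact hu1 s hs
    refine ((d0.fun_mul ((d0.fun_mul d1).const_sub (α 1))).congr_of_eventuallyEq e).congr_deriv ?_
    rw [hu2 t ht, hu1 t ht, hu0 t ht]
    field_simp
    ring
  · have e : (fun s => u 0 s + u 1 s + u 2 s) =ᶠ[nhds t] fun s => f 0 s + f 1 s + f 2 s := by
      filter_upwards [hU'] with s hs
      rw [hu2 s hs]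
      ring
    refine (((d0.fun_add d1).fun_add d2).congr_of_eventuallyEq e).congr_deriv ?_
    ring
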